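/- For every x and r > 0 such that B̄_x(r') ⊆ Ω for all r' in a neighborhood of r, the function r ↦ H_φ(x,r) is differentiable at r and ∂_r H_φ(x,r) = (3/r) H_φ(x,r) + 2 D_φ(x,r). -/

import Mathlib

open Metric MeasureTheory
open scoped RealInnerProductSpace

noncomputable section

abbrev E4 := EuclideanSpace ℝ (Fin 4)

variable {E : Type*} [NormedAddCommGroup E] [InnerProductSpace ℝ E] [FiniteDimensional ℝ E]

/-- `u` is smooth and harmonic (the Laplacian, i.e. the sum of the pure second
derivatives in the coordinate directions, vanishes) on `Ω`. -/
def IsHarmonicOn (u : E4 → E) (Ω : Set E4) : Prop :=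
  ContDiffOn ℝ (⊤ : ℕ∞) u Ω ∧
  ∀ x ∈ Ω, ∑ i : Fin 4,
    iteratedFDeriv ℝ 2 u x ![EuclideanSpace.single i (1:ℝ), EuclideanSpace.single i 1] = 0

/-- `|∇u(y)|²`, the squared Frobenius norm of the derivative of `u` at `y`. -/
def gradSq (u : E4 → E) (y : E4) : ℝ :=
  ∑ i : Fin 4, ‖fderiv ℝ u y (EuclideanSpace.single i (1:ℝ))‖ ^ 2

/-- `D_φ(x,r) = ∫ |∇u(y)|² φ(|y−x|/r) dy`. -/
def Dphi (φ : ℝ → ℝ) (u : E4 → E) (x : E4) (r : ℝ) : ℝ :=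
  ∫ y, gradSq u y * φ (‖y - x‖ / r)

/-- `H_φ(x,r) = −∫ |u(y)|² |y−x|⁻¹ φ'(|y−x|/r) dy`. -/
def Hphi (φ : ℝ → ℝ) (u : E4 → E) (x : E4) (r : ℝ) : ℝ :=
  -∫ y, ‖u y‖ ^ 2 * ‖y - x‖⁻¹ * deriv φ (‖y - x‖ / r)

/-- `E_φ(x,r) = −∫ |∂_{ν_x}u(y)|² |y−x| φ'(|y−x|/r) dy`, where `ν_x(y) = (y−x)/|y−x|`. -/
def Ephi (φ : ℝ → ℝ) (u : E4 → E) (x : E4) (r : ℝ) : ℝ :=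
  -∫ y, ‖fderiv ℝ u y (‖y - x‖⁻¹ • (y - x))‖ ^ 2 * ‖y - x‖ * deriv φ (‖y - x‖ / r)

/-- The smoothed frequency `N_φ(x,r) = r D_φ(x,r) / H_φ(x,r)`. -/
def Nphi (φ : ℝ → ℝ) (u : E4 → E) (x : E4) (r : ℝ) : ℝ :=
  r * Dphi φ u x r / Hphi φ u x r

open Filter Topology in
theorem aux_green (f g : E4 → ℝ) (hf : ContDiff ℝ 2 f) (hg : ContDiff ℝ 2 g)
    (hfc : HasCompactSupport f) (w : E4) :
    ∫ y, f y * fderiv ℝ (fun z => fderiv ℝ g z w) y w =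
      ∫ y, fderiv ℝ (fun z => fderiv ℝ f z w) y w * g y := by
  have hf1 : ContDiff ℝ 1 (fun z => fderiv ℝ f z w) :=
    (hf.fderiv_right (m := 1) (by norm_num)).clm_apply contDiff_const
  have hg1 : ContDiff ℝ 1 (fun z => fderiv ℝ g z w) :=
    (hg.fderiv_right (m := 1) (by norm_num)).clm_apply contDiff_const
  have hf2 : Continuous (fun z => fderiv ℝ (fun z => fderiv ℝ f z w) z w) :=
    (hf1.continuous_fderiv (by norm_num)).clm_apply continuous_const
  have hg2 : Continuous (fun z => fderiv ℝ (fun z => fderiv ℝ g z w) z w) :=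
    (hg1.continuous_fderiv (by norm_num)).clm_apply continuous_const
  have c1 : HasCompactSupport (fun z => fderiv ℝ f z w) := hfc.fderiv_apply ℝ w
  have c2 : HasCompactSupport (fun z => fderiv ℝ (fun z => fderiv ℝ f z w) z w) :=
    c1.fderiv_apply ℝ w
  rw [integral_mul_fderiv_eq_neg_fderiv_mul_of_integrable,
    integral_mul_fderiv_eq_neg_fderiv_mul_of_integrable, neg_neg]
  · exact (hf2.mul hg.continuous).integrable_of_hasCompactSupport c2.mul_right
  · exact (hf1.continuous.mul hg1.continuous).integrable_of_hasCompactSupport c1.mul_right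
  · exact (hf1.continuous.mul hg.continuous).integrable_of_hasCompactSupport c1.mul_right
  · exact fun y _ => (hf1.differentiable (by norm_num)) y
  · exact fun y _ => (hg.differentiable (by norm_num)) y
  · exact (hf1.continuous.mul hg1.continuous).integrable_of_hasCompactSupport c1.mul_right
  · exact (hf.continuous.mul hg2).integrable_of_hasCompactSupport hfc.mul_right
  · exact (hf.continuous.mul hg1.continuous).integrable_of_hasCompactSupport hfc.mul_right
  · exact fun y _ => (hf.differentiable (by norm_num)) y
  · exact fun y _ => (hg1.differentiable (by norm_num)) y

theorem aux_norm (x w y : E4) (h : y ≠ x) :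
    HasDerivAt (fun t : ℝ => ‖y + t • w - x‖) (⟪y - x, w⟫ / ‖y - x‖) 0 := by
  have h0 : y - x ≠ 0 := sub_ne_zero.2 h
  have h1 : HasDerivAt (fun t : ℝ => y + t • w - x) w 0 := by
    have := (((hasDerivAt_id (0:ℝ)).smul_const w).const_add y).sub_const x
    simpa using this
  have h2 := h1.norm_sq.sqrt (by simpa using h0)
  simp only [zero_smul, add_zero, Real.sqrt_sq (norm_nonneg _)] at h2
  convert h2 using 1
  have : ‖y - x‖ ≠ 0 := norm_ne_zero_iff.2 h0
  field_simp

theorem aux_contDiff (φ : ℝ → ℝ) (hφs : ContDiff ℝ (⊤ : ℕ∞) φ)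
    (hφ1 : ∀ t ≤ (3/4 : ℝ), φ t = 1) (x : E4) (r : ℝ) (hr : 0 < r) :
    ContDiff ℝ 2 (fun y => φ (‖y - x‖ / r)) := by
  rw [contDiff_iff_contDiffAt]
  intro y
  by_cases h : y = x
  · have : (fun y => φ (‖y - x‖ / r)) =ᶠ[nhds y] fun _ => 1 := by
      have : Metric.ball x (r / 2) ∈ nhds y := by
        rw [h]; exact Metric.ball_mem_nhds _ (by positivity)
      filter_upwards [this] with z hz
      rw [mem_ball_iff_norm] at hz
      apply hφ1
      rw [div_le_iff₀ hr]; linarith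
    exact contDiffAt_const.congr_of_eventuallyEq this
  · have h0 : y - x ≠ 0 := sub_ne_zero.2 h
    have h1 : ContDiffAt ℝ 2 (fun y => ‖y - x‖) y :=
      ContDiffAt.norm ℝ (contDiffAt_id.sub contDiffAt_const) h0
    exact (contDiff_infty.1 hφs 2).contDiffAt.comp y (h1.div_const r)

theorem aux_d1 (φ : ℝ → ℝ) (hφs : ContDiff ℝ (⊤ : ℕ∞) φ)
    (hφ1 : ∀ t ≤ (3/4 : ℝ), φ t = 1) (x : E4) (r : ℝ) (hr : 0 < r) (w y : E4) (h : y ≠ x) :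
    fderiv ℝ (fun y => φ (‖y - x‖ / r)) y w =
      deriv φ (‖y - x‖ / r) * (⟪y - x, w⟫ / ‖y - x‖ / r) := by
  have hd := ((aux_contDiff φ hφs hφ1 x r hr).differentiable (by norm_num)) y
  rw [← hd.lineDeriv_eq_fderiv]
  have h1 := (aux_norm x w y h).div_const r
  have h2 : HasDerivAt φ (deriv φ (‖y + (0:ℝ) • w - x‖ / r)) (‖y + (0:ℝ) • w - x‖ / r) :=
    ((hφs.differentiable (by simp)) _).hasDerivAt
  have h3 := h2.comp (0:ℝ) h1
  simp only [zero_smul, add_zero] at h3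
  exact h3.deriv

theorem aux_d2 (φ : ℝ → ℝ) (hφs : ContDiff ℝ (⊤ : ℕ∞) φ)
    (hφ1 : ∀ t ≤ (3/4 : ℝ), φ t = 1) (x : E4) (r : ℝ) (hr : 0 < r) (w y : E4) (h : y ≠ x) :
    fderiv ℝ (fun z => fderiv ℝ (fun y => φ (‖y - x‖ / r)) z w) y w =
      deriv (deriv φ) (‖y - x‖ / r) / r ^ 2 * (⟪y - x, w⟫ ^ 2 / ‖y - x‖ ^ 2) +
      deriv φ (‖y - x‖ / r) / r * (‖w‖ ^ 2 / ‖y - x‖ - ⟪y - x, w⟫ ^ 2 / ‖y - x‖ ^ 3) := by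
  have hc := aux_contDiff φ hφs hφ1 x r hr
  have hd1 : ContDiff ℝ 1 (fun z => fderiv ℝ (fun y => φ (‖y - x‖ / r)) z w) :=
    (hc.fderiv_right (m := 1) (by norm_num)).clm_apply contDiff_const
  rw [← ((hd1.differentiable (by norm_num)) y).lineDeriv_eq_fderiv]
  have hρ : ‖y - x‖ ≠ 0 := norm_ne_zero_iff.2 (sub_ne_zero.2 h)
  have h1 := (aux_norm x w y h)
  have hφ' : ContDiff ℝ (⊤ : ℕ∞) (deriv φ) := (contDiff_infty_iff_deriv.1 hφs).2
  have h2 : HasDerivAt (deriv φ) (deriv (deriv φ) (‖y + (0:ℝ) • w - x‖ / r))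
      (‖y + (0:ℝ) • w - x‖ / r) :=
    ((hφ'.differentiable (by simp)) _).hasDerivAt
  have h3 := h2.comp (0:ℝ) (h1.div_const r)
  have h4 : HasDerivAt (fun t : ℝ => y + t • w - x) w 0 := by
    have := (((hasDerivAt_id (0:ℝ)).smul_const w).const_add y).sub_const x
    simpa using this
  have h5 := h4.inner ℝ (hasDerivAt_const (0:ℝ) w)
  have h6 := h3.mul ((h5.div h1 (by simpa using hρ)).div_const r)
  have h7 := h6.congr_of_eventuallyEq
    (f₁ := fun t : ℝ => fderiv ℝ (fun y => φ (‖y - x‖ / r)) (y + t • w) w) (by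
    have hcont : Filter.Tendsto (fun t : ℝ => y + t • w) (nhds 0) (nhds y) := by
      have : Continuous (fun t : ℝ => y + t • w) := by fun_prop
      simpa using this.tendsto 0
    filter_upwards [hcont.eventually_ne h] with t ht
    exact aux_d1 φ hφs hφ1 x r hr w _ ht)
  unfold lineDeriv
  rw [h7.deriv]
  simp only [Function.comp, zero_smul, add_zero, inner_zero_right, zero_add, real_inner_self_eq_norm_sq,
    Pi.div_apply]
  field_simp

theorem aux_lap (φ : ℝ → ℝ) (hφs : ContDiff ℝ (⊤ : ℕ∞) φ)
    (hφ1 : ∀ t ≤ (3/4 : ℝ), φ t = 1) (x : E4) (r : ℝ) (hr : 0 < r) (y : E4) (h : y ≠ x) :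
    ∑ i : Fin 4, fderiv ℝ (fun z => fderiv ℝ (fun y => φ (‖y - x‖ / r)) z
      (EuclideanSpace.single i (1:ℝ))) y (EuclideanSpace.single i (1:ℝ)) =
      deriv (deriv φ) (‖y - x‖ / r) / r ^ 2 +
      3 / r * (‖y - x‖⁻¹ * deriv φ (‖y - x‖ / r)) := by
  have hρ : ‖y - x‖ ≠ 0 := norm_ne_zero_iff.2 (sub_ne_zero.2 h)
  simp only [aux_d2 φ hφs hφ1 x r hr _ y h]
  have hs : ∑ i : Fin 4, ⟪y - x, EuclideanSpace.single i (1:ℝ)⟫ ^ 2 = ‖y - x‖ ^ 2 := by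
    rw [EuclideanSpace.real_norm_sq_eq]
    simp [EuclideanSpace.inner_single_right]
  rw [Finset.sum_add_distrib, ← Finset.mul_sum, ← Finset.mul_sum, Finset.sum_sub_distrib,
    ← Finset.sum_div, ← Finset.sum_div, ← Finset.sum_div, hs]
  simp
  field_simp
  ring

theorem aux_sq (v : E4 → E) (hv : ContDiff ℝ 2 v) (w y : E4) :
    fderiv ℝ (fun z => fderiv ℝ (fun y => ‖v y‖ ^ 2) z w) y w =
      2 * ‖fderiv ℝ v y w‖ ^ 2 + 2 * ⟪v y, iteratedFDeriv ℝ 2 v y ![w, w]⟫ := by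
  have hd := hv.differentiable (by norm_num)
  have e : (fun z => fderiv ℝ (fun y => ‖v y‖ ^ 2) z w) =
      fun z => 2 * ⟪v z, fderiv ℝ v z w⟫ := by
    ext z
    rw [((hd z).hasFDerivAt.norm_sq).fderiv]
    simp
  have h1 : Differentiable ℝ (fderiv ℝ v) :=
    (hv.fderiv_right (m := 1) (by norm_num)).differentiable (by norm_num)
  have h2 := ((h1 y).hasFDerivAt.clm_apply (hasFDerivAt_const w y))
  have h3 := ((hd y).hasFDerivAt.inner ℝ h2).const_mul 2
  rw [e, h3.fderiv, iteratedFDeriv_two_apply]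
  simp [real_inner_self_eq_norm_sq]
  ring

theorem aux_dphi (φ : ℝ → ℝ) (hφ1 : ∀ t ≤ (3/4 : ℝ), φ t = 1) (t : ℝ) (ht : t < 3/4) :
    deriv φ t = 0 := by
  have : φ =ᶠ[nhds t] fun _ => 1 := by
    filter_upwards [Iio_mem_nhds ht] with s hs using hφ1 s (le_of_lt hs)
  rw [this.deriv_eq]; simp

theorem aux_dphi' (φ : ℝ → ℝ) (hφ0 : ∀ t, (1:ℝ) ≤ t → φ t = 0) (t : ℝ) (ht : 1 < t) :
    deriv φ t = 0 := by
  have : φ =ᶠ[nhds t] fun _ => 0 := by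
    filter_upwards [Ioi_mem_nhds ht] with s hs using hφ0 s (le_of_lt hs)
  rw [this.deriv_eq]; simp

theorem aux_deriv (φ : ℝ → ℝ) (hφs : ContDiff ℝ (⊤ : ℕ∞) φ)
    (hφ1 : ∀ t ≤ (3/4 : ℝ), φ t = 1) (hφ0 : ∀ t, (1:ℝ) ≤ t → φ t = 0)
    (f : E4 → ℝ) (hf : Continuous f) (hfc : HasCompactSupport f) (x : E4) (r : ℝ) (hr : 0 < r) :
    Integrable (fun y => f y * ‖y - x‖⁻¹ * deriv φ (‖y - x‖ / r)) ∧
    Integrable (fun y => f y * ‖y - x‖⁻¹ *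
      (deriv (deriv φ) (‖y - x‖ / r) * (‖y - x‖ * -(r ^ 2)⁻¹))) ∧
    HasDerivAt (fun t => ∫ y, f y * ‖y - x‖⁻¹ * deriv φ (‖y - x‖ / t))
      (∫ y, f y * ‖y - x‖⁻¹ * (deriv (deriv φ) (‖y - x‖ / r) * (‖y - x‖ * -(r ^ 2)⁻¹))) r := by
  have hφ' : ContDiff ℝ (⊤ : ℕ∞) (deriv φ) := (contDiff_infty_iff_deriv.1 hφs).2
  have hφ'' : ContDiff ℝ (⊤ : ℕ∞) (deriv (deriv φ)) := (contDiff_infty_iff_deriv.1 hφ').2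
  have m1 : Measurable (deriv φ) := hφ'.continuous.measurable
  have m2 : Measurable (deriv (deriv φ)) := hφ''.continuous.measurable
  have mf : Measurable f := hf.measurable
  have hcs : HasCompactSupport (deriv φ) := by
    refine HasCompactSupport.intro (isCompact_Icc (a := (3/4:ℝ)) (b := 1)) ?_
    intro t ht
    rw [Set.mem_Icc, not_and_or, not_le, not_le] at ht
    rcases ht with h | h
    · exact aux_dphi φ hφ1 t h
    · exact aux_dphi' φ hφ0 t h
  obtain ⟨C, hC⟩ := hφ''.continuous.bounded_above_of_compact_support hcs.deriv
  have hC0 : 0 ≤ C := (norm_nonneg _).trans (hC 0)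
  have hC1 : ∀ s, ‖deriv φ s‖ ≤ C * ‖s‖ := by
    intro s
    have := Convex.norm_image_sub_le_of_norm_deriv_le (f := deriv φ) (s := Set.univ) (x := 0) (y := s)
      (fun z _ => (hφ'.differentiable (by simp)) z) (fun z _ => hC z) convex_univ
      (Set.mem_univ _) (Set.mem_univ _)
    simpa [aux_dphi φ hφ1 0 (by norm_num)] using this
  have hi : Integrable f := hf.integrable_of_hasCompactSupport hfc
  have hinv : ∀ y : E4, ‖y - x‖⁻¹ * ‖y - x‖ ≤ 1 := by
    intro y
    exact inv_mul_le_one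
  have I1 : Integrable (fun y => f y * ‖y - x‖⁻¹ * deriv φ (‖y - x‖ / r)) := by
    refine (hi.norm.mul_const (C / r)).mono' ?_ ?_
    · exact Measurable.aestronglyMeasurable (by fun_prop)
    · filter_upwards with y
      have h1 := hC1 (‖y - x‖ / r)
      rw [norm_mul, norm_mul, norm_inv, norm_norm]
      calc ‖f y‖ * ‖y - x‖⁻¹ * ‖deriv φ (‖y - x‖ / r)‖
          ≤ ‖f y‖ * ‖y - x‖⁻¹ * (C * ‖‖y - x‖ / r‖) := by gcongr
        _ = ‖f y‖ * (C / r) * (‖y - x‖⁻¹ * ‖y - x‖) := by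
          rw [norm_div, norm_norm, Real.norm_of_nonneg hr.le]; ring
        _ ≤ ‖f y‖ * (C / r) * 1 := by
          gcongr; exact hinv y
        _ = _ := mul_one _
  refine ⟨I1, ?_⟩
  refine hasDerivAt_integral_of_dominated_loc_of_deriv_le (s := Set.Ioi (r / 2))
    (F := fun t y => f y * ‖y - x‖⁻¹ * deriv φ (‖y - x‖ / t))
    (F' := fun t y => f y * ‖y - x‖⁻¹ * (deriv (deriv φ) (‖y - x‖ / t) * (‖y - x‖ * -(t ^ 2)⁻¹)))
    (bound := fun y => ‖f y‖ * (C * ((r / 2) ^ 2)⁻¹)) (Ioi_mem_nhds (by linarith)) ?_ I1 ?_ ?_ ?_ ?_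
  · filter_upwards with t
    exact Measurable.aestronglyMeasurable (by fun_prop)
  · exact Measurable.aestronglyMeasurable (by fun_prop)
  · filter_upwards with y t ht
    have ht' : r / 2 < t := ht
    have ht0 : 0 < t := by linarith
    simp only [norm_mul, norm_inv, norm_norm, norm_neg]
    rw [Real.norm_of_nonneg (sq_nonneg t)]
    calc ‖f y‖ * ‖y - x‖⁻¹ * (‖deriv (deriv φ) (‖y - x‖ / t)‖ * (‖y - x‖ * (t ^ 2)⁻¹))
        ≤ ‖f y‖ * ‖y - x‖⁻¹ * (C * (‖y - x‖ * ((r / 2) ^ 2)⁻¹)) := by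
          gcongr
          exact hC _
      _ = ‖f y‖ * (C * ((r / 2) ^ 2)⁻¹) * (‖y - x‖⁻¹ * ‖y - x‖) := by ring
      _ ≤ ‖f y‖ * (C * ((r / 2) ^ 2)⁻¹) * 1 := by
          gcongr; exact hinv y
      _ = _ := mul_one _
  · exact hi.norm.mul_const _
  · filter_upwards with y t ht
    have ht' : r / 2 < t := ht
    have ht0 : t ≠ 0 := by intro h; linarith
    have h2 : HasDerivAt (deriv φ) (deriv (deriv φ) (‖y - x‖ / t)) (‖y - x‖ / t) :=
      ((hφ'.differentiable (by simp)) _).hasDerivAt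
    have h1 : HasDerivAt (fun t => ‖y - x‖ / t) (‖y - x‖ * -(t ^ 2)⁻¹) t := by
      simpa [div_eq_mul_inv] using (hasDerivAt_inv ht0).const_mul ‖y - x‖
    exact (h2.comp t h1).const_mul _

/-- Flat-case identity (4.4): `∂_r H_φ(x,r) = (3/r) H_φ(x,r) + 2 D_φ(x,r)`. -/
theorem stmt_10 (φ : ℝ → ℝ) (hφs : ContDiff ℝ (⊤ : ℕ∞) φ) (hφa : Antitone φ)
    (hφ1 : ∀ t ≤ (3/4 : ℝ), φ t = 1) (hφ0 : ∀ t, (1:ℝ) ≤ t → φ t = 0)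
    (Ω : Set E4) (hΩ : IsOpen Ω) (u : E4 → E) (hu : IsHarmonicOn u Ω)
    (x : E4) (r : ℝ) (hr : 0 < r)
    (hball : ∀ᶠ r' in nhds r, closedBall x r' ⊆ Ω) :
    HasDerivAt (fun t => Hphi φ u x t)
      (3 / r * Hphi φ u x r + 2 * Dphi φ u x r) r := by
  obtain ⟨R, hRΩ, hrR⟩ : ∃ R, closedBall x R ⊆ Ω ∧ r < R := by
    have h1 : ∀ᶠ r' in nhdsWithin r (Set.Ioi r), closedBall x r' ⊆ Ω :=
      hball.filter_mono nhdsWithin_le_nhds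
    obtain ⟨R, h⟩ := (h1.and self_mem_nhdsWithin).exists
    exact ⟨R, h.1, h.2⟩
  obtain ⟨r₁, hr1, hr1R⟩ := exists_between hrR
  let χ : ContDiffBump x := ⟨r₁, R, hr.trans hr1, hr1R⟩
  let v : E4 → E := fun y => χ y • u y
  have hv : ContDiff ℝ 2 v := by
    rw [contDiff_iff_contDiffAt]
    intro y
    by_cases hy : y ∈ Ω
    · exact χ.contDiffAt.smul
        (((hu.1.of_le (by exact_mod_cast le_top)).contDiffAt (hΩ.mem_nhds hy)))
    · have hyt : y ∉ tsupport χ := by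
        rw [χ.tsupport_eq]; exact fun h => hy (hRΩ h)
      have : v =ᶠ[nhds y] fun _ => 0 := by
        filter_upwards [notMem_tsupport_iff_eventuallyEq.1 hyt] with z hz
        simp [v, hz]
      exact contDiffAt_const.congr_of_eventuallyEq this
  have hvc : HasCompactSupport v := χ.hasCompactSupport.smul_right
  have hvu : ∀ y ∈ ball x r₁, v =ᶠ[nhds y] u := by
    intro y hy
    filter_upwards [χ.eventuallyEq_one_of_mem_ball hy] with z hz
    simp [v, hz]
  set f : E4 → ℝ := fun y => ‖v y‖ ^ 2 with hfdef
  have hf : ContDiff ℝ 2 f := hv.norm_sq ℝ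
  have hfc : HasCompactSupport f := hvc.comp_left (g := fun e : E => ‖e‖ ^ 2) (by simp)
  have hH : ∀ t, 0 < t → t < r₁ →
      Hphi φ u x t = -∫ y, f y * ‖y - x‖⁻¹ * deriv φ (‖y - x‖ / t) := by
    intro t ht0 ht
    unfold Hphi
    congr 2
    ext y
    by_cases hy : y ∈ ball x r₁
    · simp only [hfdef, (hvu y hy).eq_of_nhds]
    · rw [mem_ball_iff_norm, not_lt] at hy
      rw [aux_dphi' φ hφ0 _ (by rw [lt_div_iff₀ ht0]; linarith)]
      simp
  obtain ⟨I1, I2, hd⟩ := aux_deriv φ hφs hφ1 hφ0 f hf.continuous hfc x r hr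
  have hd' := hd.neg
  have hd2 := hd'.congr_of_eventuallyEq (f₁ := fun t => Hphi φ u x t) (by
    filter_upwards [Ioo_mem_nhds hr hr1] with t ht
    exact hH t ht.1 ht.2)
  refine HasDerivAt.congr_deriv hd2 (Eq.symm ?_)
  rw [hH r hr hr1]
  set ψ : E4 → ℝ := fun y => φ (‖y - x‖ / r) with hψdef
  have hψ : ContDiff ℝ 2 ψ := aux_contDiff φ hφs hφ1 x r hr
  let e : Fin 4 → E4 := fun i => EuclideanSpace.single i (1:ℝ)
  have g := fun i => aux_green f ψ hf hψ hfc (e i)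
  have hD : 2 * Dphi φ u x r =
      ∑ i, ∫ y, fderiv ℝ (fun z => fderiv ℝ f z (e i)) y (e i) * ψ y := by
    rw [← integral_finsetSum, Dphi, ← integral_const_mul]
    · congr 1
      ext y
      rw [← Finset.sum_mul]
      by_cases hy : y ∈ ball x r₁
      · simp only [hfdef, aux_sq v hv]
        have hyΩ : y ∈ Ω := hRΩ (ball_subset_closedBall (ball_subset_ball hr1R.le hy))
        have hit : iteratedFDeriv ℝ 2 v y = iteratedFDeriv ℝ 2 u y :=
          ((hvu y hy).iteratedFDeriv ℝ 2).eq_of_nhds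
        rw [(hvu y hy).fderiv_eq, (hvu y hy).eq_of_nhds, hit, Finset.sum_add_distrib,
          ← Finset.mul_sum, ← Finset.mul_sum, ← inner_sum]
        have := hu.2 y hyΩ
        rw [this]
        simp [gradSq, e, hψdef]
        ring
      · rw [mem_ball_iff_norm, not_lt] at hy
        have : ψ y = 0 := hφ0 _ (by rw [le_div_iff₀ hr]; linarith)
        have h' : φ (‖y - x‖ / r) = 0 := this
        rw [this, h']; simp
    · intro i _
      have hf1 : ContDiff ℝ 1 (fun z => fderiv ℝ f z (e i)) :=
        (hf.fderiv_right (m := 1) (by norm_num)).clm_apply contDiff_const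
      have hf2 : Continuous (fun z => fderiv ℝ (fun z => fderiv ℝ f z (e i)) z (e i)) :=
        (hf1.continuous_fderiv (by norm_num)).clm_apply continuous_const
      exact (hf2.mul hψ.continuous).integrable_of_hasCompactSupport
        ((hfc.fderiv_apply ℝ (e i)).fderiv_apply ℝ (e i)).mul_right
  have hL : ∑ i, ∫ y, f y * fderiv ℝ (fun z => fderiv ℝ ψ z (e i)) y (e i) =
      -(∫ y, f y * ‖y - x‖⁻¹ * (deriv (deriv φ) (‖y - x‖ / r) * (‖y - x‖ * -(r ^ 2)⁻¹))) +
      3 / r * ∫ y, f y * ‖y - x‖⁻¹ * deriv φ (‖y - x‖ / r) := by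
    rw [← integral_finsetSum, ← integral_const_mul, ← integral_neg, ← integral_add I2.fun_neg
      (I1.const_mul _)]
    · apply integral_congr_ae
      have hne : ∀ᵐ y : E4, y ≠ x := by
        simp [ae_iff]
      filter_upwards [hne] with y hy
      have hρ : ‖y - x‖ ≠ 0 := norm_ne_zero_iff.2 (sub_ne_zero.2 hy)
      rw [← Finset.mul_sum, aux_lap φ hφs hφ1 x r hr y hy]
      field_simp
    · intro i _
      have hf1 : ContDiff ℝ 1 (fun z => fderiv ℝ ψ z (e i)) :=
        (hψ.fderiv_right (m := 1) (by norm_num)).clm_apply contDiff_const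
      have hf2 : Continuous (fun z => fderiv ℝ (fun z => fderiv ℝ ψ z (e i)) z (e i)) :=
        (hf1.continuous_fderiv (by norm_num)).clm_apply continuous_const
      exact (hf.continuous.mul hf2).integrable_of_hasCompactSupport hfc.mul_right
  rw [hD, ← Finset.sum_congr rfl (fun i _ => g i), hL]
  ring
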